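/- Let Λ = ℤ ⊕ L ⊕ ℤ be the Mukai lattice over the even unimodular lattice L = L₀ ⊕ L₀ ⊕ U ⊕ U ⊕ U, with T = e^β ∘ τ as above. Then the T-invariant sublattice Λ^T, with the restricted Mukai pairing, has the property that ⟨v, v'⟩ is even for all v, v' ∈ Λ^T. -/

import Mathlib

/-!
Comparing components in `T v = v`, the involution forces `v` to be symmetric under the two
swaps, and in the third `U` summand it gives `-z₃ + r • (1, 1) = z₃`. Hence
`v = (2a, (x, x, z, z, (a, a)), s)`. For two such vectors the two copies of `L₀` contribute
equally to the pairing, as do the first two copies of `U`; the third `U` contributes `2aa'`,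
and the hyperbolic part contributes `-2as' - 2a's`. Every contribution is therefore even.
-/

/-- The hyperbolic plane form on `U = ℤ × ℤ`. -/
def Ubil (z w : ℤ × ℤ) : ℤ := z.1 * w.2 + z.2 * w.1

/-- The lattice `L = L₀ ⊕ L₀ ⊕ U ⊕ U ⊕ U`. -/
abbrev LatE (L₀ : Type*) := L₀ × L₀ × (ℤ × ℤ) × (ℤ × ℤ) × (ℤ × ℤ)

/-- The orthogonal direct sum form on `L = L₀ ⊕ L₀ ⊕ U ⊕ U ⊕ U`. -/
def Lbil {L₀ : Type*} [AddCommGroup L₀] [Module ℤ L₀]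
    (B₀ : L₀ →ₗ[ℤ] L₀ →ₗ[ℤ] ℤ) (a b : LatE L₀) : ℤ :=
  B₀ a.1 b.1 + B₀ a.2.1 b.2.1 + Ubil a.2.2.1 b.2.2.1 +
    Ubil a.2.2.2.1 b.2.2.2.1 + Ubil a.2.2.2.2 b.2.2.2.2

/-- The involution `τ(x,y,z₁,z₂,z₃) = (y,x,z₂,z₁,−z₃)`. -/
def tauL {L₀ : Type*} [AddCommGroup L₀] (a : LatE L₀) : LatE L₀ :=
  (a.2.1, a.1, a.2.2.2.1, a.2.2.1, -a.2.2.2.2)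

/-- The Mukai lattice `Λ = ℤ ⊕ L ⊕ ℤ`. -/
abbrev Muk (L₀ : Type*) := ℤ × LatE L₀ × ℤ

/-- The Mukai pairing `⟨(r,c,s),(r',c',s')⟩ = ⟨c,c'⟩ − rs' − r's`. -/
def mukai {L₀ : Type*} [AddCommGroup L₀] [Module ℤ L₀]
    (B₀ : L₀ →ₗ[ℤ] L₀ →ₗ[ℤ] ℤ) (v w : Muk L₀) : ℤ :=
  Lbil B₀ v.2.1 w.2.1 - v.1 * w.2.2 - w.1 * v.2.2

/-- The B-field `β = e + f` in the third `U` summand. -/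
def betaL (L₀ : Type*) [AddCommGroup L₀] : LatE L₀ :=
  (0, 0, 0, 0, (1, 1))

/-- `T = e^β ∘ τ` on the Mukai lattice, where `e^β(r,c,s) = (r, c + rβ, s + ⟨c,β⟩ + r)`
(using `⟨β,β⟩ = 2`). -/
def Tmuk {L₀ : Type*} [AddCommGroup L₀] [Module ℤ L₀]
    (B₀ : L₀ →ₗ[ℤ] L₀ →ₗ[ℤ] ℤ) (v : Muk L₀) : Muk L₀ :=
  (v.1, tauL v.2.1 + v.1 • betaL L₀,
    v.2.2 + Lbil B₀ (tauL v.2.1) (betaL L₀) + v.1)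

/-- On the `T`-invariant sublattice `Λ^T` of the Mukai lattice, the restricted Mukai
pairing takes only even values. -/
theorem invariant_sublattice_even {L₀ : Type*} [AddCommGroup L₀] [Module ℤ L₀]
    (B₀ : L₀ →ₗ[ℤ] L₀ →ₗ[ℤ] ℤ)
    (hsymm : ∀ a b, B₀ a b = B₀ b a)
    (heven : ∀ a, Even (B₀ a a))
    (hunimodular : Function.Bijective fun x : L₀ => B₀ x) :
    ∀ v v' : Muk L₀, Tmuk B₀ v = v → Tmuk B₀ v' = v' →
      Even (mukai B₀ v v') := by
  rintro ⟨r, ⟨x, y, ⟨p, q⟩, ⟨p₂, q₂⟩, ⟨a, b⟩⟩, s⟩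
    ⟨r', ⟨x', y', ⟨p', q'⟩, ⟨p₂', q₂'⟩, ⟨a', b'⟩⟩, s'⟩ h h'
  simp only [Tmuk, tauL, betaL, Prod.ext_iff, Prod.fst_add, Prod.snd_add, Prod.smul_fst,
    Prod.smul_snd, Prod.fst_neg, Prod.snd_neg, smul_zero, zsmul_zero, add_zero, smul_eq_mul, mul_one] at h h'
  obtain ⟨-, ⟨hx, -, ⟨hp, hq⟩, -, ha, hb⟩, -⟩ := h
  obtain ⟨-, ⟨hx', -, ⟨hp', hq'⟩, -, ha', hb'⟩, -⟩ := h'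
  subst hx hp hq hx' hp' hq'
  obtain rfl : b = a := by lia
  obtain rfl : b' = a' := by lia
  obtain rfl : r = 2 * b := by lia
  obtain rfl : r' = 2 * b' := by lia
  simp only [mukai, Lbil, Ubil]
  refine ⟨B₀ y y' + (p₂ * q₂' + q₂ * p₂') + b * b' - b * s' - b' * s, ?_⟩
  ring
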